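/- arXiv:1204.3778 — 4 statements merged into one kernel-verified Lean document; each statement's English description precedes it below -/
import Mathlib

section
/- Suppose Ω is nonempty, connected and simply connected. Then there exists a smooth function g : Ω → ℝ such that g_s(s,t) = [x_s(s,t), c(s,t)] and g_t(s,t) = [x_t(s,t), c(s,t)] for all (s,t) ∈ Ω. -/
noncomputable section

/-- `det2 u v` is the determinant of the 2×2 matrix with columns `u` and `v`. -/
def det2 (u v : ℝ × ℝ) : ℝ := u.1 * v.2 - u.2 * v.1

/-- Partial derivative with respect to the first coordinate `s`. -/
def pds (f : ℝ × ℝ → ℝ) (p : ℝ × ℝ) : ℝ := fderiv ℝ f p (1, 0)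

/-- Partial derivative with respect to the second coordinate `t`. -/
def pdt (f : ℝ × ℝ → ℝ) (p : ℝ × ℝ) : ℝ := fderiv ℝ f p (0, 1)

/-- The planar map `x = (A, B)`. -/
def xmap (A B : ℝ × ℝ → ℝ) (p : ℝ × ℝ) : ℝ × ℝ := (A p, B p)

/-- The conjugate map `c = (-D, C)`. -/
def cmap (C D : ℝ × ℝ → ℝ) (p : ℝ × ℝ) : ℝ × ℝ := (-D p, C p)

/-- `x_s = (A_s, B_s)`. -/
def xs (A B : ℝ × ℝ → ℝ) (p : ℝ × ℝ) : ℝ × ℝ := (pds A p, pds B p)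

/-- `x_t = (A_t, B_t)`. -/
def xt (A B : ℝ × ℝ → ℝ) (p : ℝ × ℝ) : ℝ × ℝ := (pdt A p, pdt B p)

/-- `δ = A_s B_t - A_t B_s = [x_s, x_t]`. -/
def deltaMap (A B : ℝ × ℝ → ℝ) (p : ℝ × ℝ) : ℝ :=
  pds A p * pdt B p - pdt A p * pds B p

/-!
On an open set the 1-form `ω = [dx, c] = C dA + D dB` is closed exactly when
`[x_s, c_t] = [x_t, c_s]`; under the Cauchy–Riemann equations `c_t = x_s` and `c_s = -x_t`, both
sides vanish. A closed form has primitives on balls, and two of them differ by a locally constant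
function. Hence the germs of primitives, over all points, form a covering space of `Ω` with discrete
fibre `ℝ`. Since `Ω` is simply connected, this covering has a continuous section, which is a global
primitive.
-/

open Filter Topology

section Gluing

variable {ι X G : Type*} [TopologicalSpace X] [AddGroup G] {U : ι → Set X} {f : ι → X → G}

/-- The bundle whose section with coordinate `v i` in the chart `U i` is the function that equals
`v i + f i` there. With `G` discrete and `f i - f j` locally constant, it is the covering space of
germs of functions that differ from the `f i` by a locally constant function. -/
def translationBundleCore [TopologicalSpace G] [ContinuousAdd G] (hU : ∀ i, IsOpen (U i))
    (index : X → ι) (hindex : ∀ x, x ∈ U (index x))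
    (hf : ∀ i j, ContinuousOn (fun x ↦ f i x - f j x) (U i ∩ U j)) :
    FiberBundleCore ι X G where
  baseSet := U
  isOpen_baseSet := hU
  indexAt := index
  mem_baseSet_at := hindex
  coordChange i j x v := v + (f i x - f j x)
  coordChange_self i x _ v := by simp
  continuousOn_coordChange i j :=
    continuousOn_snd.add ((hf i j).comp continuousOn_fst fun _ hp ↦ hp.1)
  coordChange_comp i j k x _ v := by rw [add_assoc, sub_add_sub_cancel]

theorem continuousOn_iff_eventually_eq_of_discreteTopology {Y : Type*} [TopologicalSpace Y]
    [DiscreteTopology Y] {h : X → Y} {s : Set X} (hs : IsOpen s) :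
    ContinuousOn h s ↔ ∀ x ∈ s, ∀ᶠ z in 𝓝 x, h z = h x := by
  simp only [hs.continuousOn_iff, ContinuousAt, nhds_discrete, tendsto_pure]

theorem exists_forall_eventually_sub_eq_of_simplyConnectedSpace [SimplyConnectedSpace X]
    [LocallyPathConnectedSpace X] (hU : ∀ i, IsOpen (U i)) (hcover : ∀ x, ∃ i, x ∈ U i)
    (hf : ∀ i j, ∀ x ∈ U i ∩ U j, ∀ᶠ z in 𝓝 x, f i z - f j z = f i x - f j x) :
    ∃ g : X → G, ∀ i, ∀ x ∈ U i, ∀ᶠ z in 𝓝 x, g z - f i z = g x - f i x := by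
  let _ : TopologicalSpace G := ⊥
  have _ : DiscreteTopology G := ⟨rfl⟩
  choose index hindex using hcover
  let Z := translationBundleCore hU index hindex fun i j ↦
    (continuousOn_iff_eventually_eq_of_discreteTopology ((hU i).inter (hU j))).mpr (hf i j)
  have hZ : IsCoveringMap Z.proj := FiberBundle.isCoveringMap (F := G) (E := Z.Fiber)
  obtain ⟨x₀⟩ : Nonempty X := inferInstance
  obtain ⟨σ, ⟨-, hσ⟩, -⟩ := hZ.existsUnique_continuousMap_lifts (.id X) x₀ ⟨x₀, (0 : G)⟩ rfl
  replace hσ (x : X) : (σ x).1 = x := congrFun hσ x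
  let v (x : X) : G := (σ x).2
  refine ⟨fun x ↦ v x + f (index x) x, fun i ↦ ?_⟩
  refine (continuousOn_iff_eventually_eq_of_discreteTopology (hU i)).mp ?_
  have hcoord (x : X) : (Z.localTriv i (σ x)).2 = v x + f (index x) x - f i x := by
    change v x + (f (index (σ x).1) (σ x).1 - f i (σ x).1) = _
    rw [hσ, add_sub_assoc]
  have hmaps : Set.MapsTo σ (U i) (Z.localTriv i).source := fun x hx ↦
    (Z.mem_localTriv_source i _).mpr (by rwa [hσ])
  exact (continuous_snd.comp_continuousOn
    ((Z.localTriv i).continuousOn.comp σ.continuous.continuousOn hmaps)).congr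
      fun x _ ↦ (hcoord x).symm

end Gluing

section Calculus

variable {𝕜 E F : Type*} [NontriviallyNormedField 𝕜] [NormedAddCommGroup E] [NormedSpace 𝕜 E]
  [NormedAddCommGroup F] [NormedSpace 𝕜 F] {f : E → F}

theorem contDiffOn_succ_of_hasFDerivAt {n : ℕ∞} {s : Set E} {ω : E → E →L[𝕜] F} (hso : IsOpen s)
    (hf : ∀ x ∈ s, HasFDerivAt f (ω x) x) (hω : ContDiffOn 𝕜 n ω s) :
    ContDiffOn 𝕜 (n + 1) f s :=
  (contDiffOn_succ_iff_fderiv_of_isOpen hso).mpr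
    ⟨fun x hx ↦ (hf x hx).differentiableAt.differentiableWithinAt, by simp,
      hω.congr fun x hx ↦ (hf x hx).fderiv⟩

theorem fderiv_smul_fderiv_sub_swap {c : E → 𝕜} {x : E} (hc : DifferentiableAt 𝕜 c x)
    (hf : DifferentiableAt 𝕜 (fderiv 𝕜 f) x) (hsymm : IsSymmSndFDerivAt 𝕜 f x) (u v : E) :
    fderiv 𝕜 (fun y ↦ c y • fderiv 𝕜 f y) x u v - fderiv 𝕜 (fun y ↦ c y • fderiv 𝕜 f y) x v u =
      fderiv 𝕜 c x u • fderiv 𝕜 f x v - fderiv 𝕜 c x v • fderiv 𝕜 f x u := by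
  rw [fderiv_fun_smul hc hf]
  simp [hsymm.eq u v]

end Calculus

section OneForms

variable {𝕜 E F : Type*} [RCLike 𝕜] [NormedAddCommGroup E] [NormedSpace 𝕜 E] [NormedSpace ℝ E]
  [NormedAddCommGroup F] [NormedSpace 𝕜 F] {s : Set E} {ω : E → E →L[𝕜] F}

theorem eventually_sub_eq_of_eventually_hasFDerivAt {f g : E → F} {x : E}
    (hf : ∀ᶠ y in 𝓝 x, HasFDerivAt f (ω y) y) (hg : ∀ᶠ y in 𝓝 x, HasFDerivAt g (ω y) y) :
    ∀ᶠ y in 𝓝 x, f y - g y = f x - g x := by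
  have hfg : ∀ᶠ y in 𝓝 x, HasFDerivAt (fun z ↦ f z - g z) (0 : E →L[𝕜] F) y := by
    filter_upwards [hf, hg] with y hfy hgy
    simpa using hfy.fun_sub hgy
  obtain ⟨t, ht, hto, hxt⟩ := eventually_nhds_iff.mp hfg
  have hlevel : IsOpen (t ∩ (fun z ↦ f z - g z) ⁻¹' {f x - g x}) :=
    hto.isOpen_inter_preimage_of_fderiv_eq_zero
      (fun y hy ↦ (ht y hy).differentiableAt.differentiableWithinAt)
      (fun y hy ↦ (ht y hy).fderiv) _
  filter_upwards [hlevel.mem_nhds ⟨hxt, rfl⟩] with y hy using hy.2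

theorem exists_forall_hasFDerivAt_of_local (hs : IsSimplyConnected s) (hso : IsOpen s)
    (hω : ∀ x ∈ s, ∃ f, ∀ᶠ y in 𝓝 x, HasFDerivAt f (ω y) y) :
    ∃ f, ∀ x ∈ s, HasFDerivAt f (ω x) x := by
  have := hs.simplyConnectedSpace
  have := hso.locallyPathConnectedSpace
  choose! f hf using hω
  let V (i : s) : Set E := {x | ∀ᶠ y in 𝓝 x, HasFDerivAt (f i) (ω y) y}
  have hV (i : s) : IsOpen (V i) := isOpen_setOfPred_eventually_nhds
  obtain ⟨g, hg⟩ := exists_forall_eventually_sub_eq_of_simplyConnectedSpace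
    (U := fun i : s ↦ Subtype.val ⁻¹' V i) (f := fun i x ↦ f i x)
    (fun i ↦ (hV i).preimage continuous_subtype_val) (fun x ↦ ⟨x, hf x x.2⟩)
    fun i j x hx ↦ continuousAt_subtype_val.eventually
      (eventually_sub_eq_of_eventually_hasFDerivAt hx.1 hx.2)
  refine ⟨Function.extend Subtype.val g 0, fun x hx ↦ ?_⟩
  lift x to s using hx
  have hgf : ∀ᶠ z in 𝓝 (x : E), Function.extend Subtype.val g 0 z = f x z + (g x - f x x) := by
    rw [← hso.isOpenEmbedding_subtypeVal.map_nhds_eq, eventually_map]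
    filter_upwards [hg x x (hf x x.2)] with z hz
    rw [Subtype.val_injective.extend_apply, ← hz, add_sub_cancel]
  exact ((hf x x.2).self_of_nhds.add_const _).congr_of_eventuallyEq hgf

theorem exists_forall_hasFDerivAt_of_fderiv_symmetric [NormedSpace ℝ F] [CompleteSpace F]
    (hs : IsSimplyConnected s) (hso : IsOpen s) (hω : DifferentiableOn ℝ ω s)
    (hdω : ∀ x ∈ s, ∀ u v, fderiv ℝ ω x u v = fderiv ℝ ω x v u) :
    ∃ f, ∀ x ∈ s, HasFDerivAt f (ω x) x := by
  refine exists_forall_hasFDerivAt_of_local hs hso fun x hx ↦ ?_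
  obtain ⟨r, hr, hball⟩ := Metric.isOpen_iff.mp hso x hx
  obtain ⟨f, hf⟩ := (convex_ball x r).exists_forall_hasFDerivAt_of_fderiv_symmetric
    Metric.isOpen_ball (hω.mono hball) fun a ha ↦ hdω a (hball ha)
  exact ⟨f, eventually_of_mem (Metric.ball_mem_nhds x hr) hf⟩

end OneForms

section Plane

variable {A B C D : ℝ × ℝ → ℝ} {p : ℝ × ℝ}

theorem fderiv_apply_eq_pds_pdt (f : ℝ × ℝ → ℝ) (p u : ℝ × ℝ) :
    fderiv ℝ f p u = u.1 * pds f p + u.2 * pdt f p := by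
  have hu : u = u.1 • ((1, 0) : ℝ × ℝ) + u.2 • ((0, 1) : ℝ × ℝ) := by ext <;> simp
  conv_lhs => rw [hu]
  simp only [map_add, map_smul, smul_eq_mul, pds, pdt]

/-- The 1-form `[dx, c] = C dA + D dB`, whose primitives are the generating functions `g`. -/
def bracketForm (A B C D : ℝ × ℝ → ℝ) (p : ℝ × ℝ) : ℝ × ℝ →L[ℝ] ℝ :=
  C p • fderiv ℝ A p + D p • fderiv ℝ B p

theorem bracketForm_apply (u : ℝ × ℝ) :
    bracketForm A B C D p u = det2 (fderiv ℝ A p u, fderiv ℝ B p u) (cmap C D p) := by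
  simp only [bracketForm, det2, cmap, add_apply, smul_apply, smul_eq_mul]
  ring

theorem contDiffOn_bracketForm {n : WithTop ℕ∞} {Ω : Set (ℝ × ℝ)} (hΩ : IsOpen Ω)
    (hA : ContDiffOn ℝ (n + 1) A Ω) (hB : ContDiffOn ℝ (n + 1) B Ω)
    (hC : ContDiffOn ℝ n C Ω) (hD : ContDiffOn ℝ n D Ω) :
    ContDiffOn ℝ n (bracketForm A B C D) Ω :=
  (hC.smul (hA.fderiv_of_isOpen hΩ le_rfl)).add (hD.smul (hB.fderiv_of_isOpen hΩ le_rfl))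

theorem pds_neg (f : ℝ × ℝ → ℝ) (p : ℝ × ℝ) : pds (-f) p = -pds f p := by
  simp [pds, fderiv_neg]

theorem pdt_neg (f : ℝ × ℝ → ℝ) (p : ℝ × ℝ) : pdt (-f) p = -pdt f p := by
  simp [pdt, fderiv_neg]

theorem fderiv_bracketForm_sub_swap (hA : ContDiffAt ℝ 2 A p) (hB : ContDiffAt ℝ 2 B p)
    (hC : DifferentiableAt ℝ C p) (hD : DifferentiableAt ℝ D p) (u v : ℝ × ℝ) :
    fderiv ℝ (bracketForm A B C D) p u v - fderiv ℝ (bracketForm A B C D) p v u =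
      (det2 (xt A B p) (xs (-D) C p) - det2 (xs A B p) (xt (-D) C p)) * det2 u v := by
  have hdA : DifferentiableAt ℝ (fderiv ℝ A) p :=
    (hA.fderiv_right (m := 1) (by norm_num)).differentiableAt one_ne_zero
  have hdB : DifferentiableAt ℝ (fderiv ℝ B) p :=
    (hB.fderiv_right (m := 1) (by norm_num)).differentiableAt one_ne_zero
  have hsum : fderiv ℝ (bracketForm A B C D) p =
      fderiv ℝ (fun q ↦ C q • fderiv ℝ A q) p + fderiv ℝ (fun q ↦ D q • fderiv ℝ B q) p :=
    fderiv_add (hC.smul hdA) (hD.smul hdB)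
  rw [hsum, add_apply, add_apply, add_apply, add_apply, add_sub_add_comm,
    fderiv_smul_fderiv_sub_swap hC hdA (hA.isSymmSndFDerivAt (by simp)),
    fderiv_smul_fderiv_sub_swap hD hdB (hB.isSymmSndFDerivAt (by simp))]
  simp only [fderiv_apply_eq_pds_pdt, smul_eq_mul, det2, xs, xt, pds_neg, pdt_neg]
  ring

theorem det2_xs_xt_eq_of_cauchyRiemann
    (hAs : pds A p = -pdt D p) (hAt : pdt A p = pds D p)
    (hBs : pds B p = pdt C p) (hBt : pdt B p = -pds C p) :
    det2 (xs A B p) (xt (-D) C p) = det2 (xt A B p) (xs (-D) C p) := by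
  simp only [det2, xs, xt, pds_neg, pdt_neg, hAs, hAt, hBs, hBt]
  ring

end Plane

theorem exists_generating_g_general {n : ℕ∞} (hn : n ≠ 0) {Ω : Set (ℝ × ℝ)} (hΩ : IsOpen Ω)
    (hsc : IsSimplyConnected Ω) {A B C D : ℝ × ℝ → ℝ}
    (hA : ContDiffOn ℝ (n + 1) A Ω) (hB : ContDiffOn ℝ (n + 1) B Ω)
    (hC : ContDiffOn ℝ n C Ω) (hD : ContDiffOn ℝ n D Ω)
    (hclosed : ∀ p ∈ Ω, det2 (xs A B p) (xt (-D) C p) = det2 (xt A B p) (xs (-D) C p)) :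
    ∃ g : ℝ × ℝ → ℝ, ContDiffOn ℝ (n + 1) g Ω ∧
      ∀ p ∈ Ω, pds g p = det2 (xs A B p) (cmap C D p) ∧
        pdt g p = det2 (xt A B p) (cmap C D p) := by
  have hn' : (n : WithTop ℕ∞) ≠ 0 := by exact_mod_cast hn
  have hn2 : (2 : WithTop ℕ∞) ≤ n + 1 := by
    rw [← one_add_one_eq_two]
    gcongr
    exact_mod_cast Order.one_le_iff_ne_zero.mpr hn
  have hω := contDiffOn_bracketForm hΩ hA hB hC hD
  obtain ⟨g, hg⟩ := exists_forall_hasFDerivAt_of_fderiv_symmetric hsc hΩ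
    (hω.differentiableOn hn') fun p hp u v ↦ by
      have hΩp := hΩ.mem_nhds hp
      rw [← sub_eq_zero, fderiv_bracketForm_sub_swap ((hA.contDiffAt hΩp).of_le hn2)
        ((hB.contDiffAt hΩp).of_le hn2) ((hC.contDiffAt hΩp).differentiableAt hn')
        ((hD.contDiffAt hΩp).differentiableAt hn'), hclosed p hp, sub_self, zero_mul]
  refine ⟨g, contDiffOn_succ_of_hasFDerivAt hΩ hg hω, fun p hp ↦ ?_⟩
  rw [pds, pdt, (hg p hp).fderiv]
  exact ⟨bracketForm_apply _, bracketForm_apply _⟩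

theorem exists_generating_g
    (Ω : Set (ℝ × ℝ)) (hΩ : IsOpen Ω)
    (A B C D : ℝ × ℝ → ℝ)
    (hA : ContDiffOn ℝ (⊤ : ℕ∞) A Ω) (hB : ContDiffOn ℝ (⊤ : ℕ∞) B Ω)
    (hC : ContDiffOn ℝ (⊤ : ℕ∞) C Ω) (hD : ContDiffOn ℝ (⊤ : ℕ∞) D Ω)
    (hCR1 : ∀ p ∈ Ω, pds A p = - pdt D p)
    (hCR2 : ∀ p ∈ Ω, pdt A p = pds D p)
    (hCR3 : ∀ p ∈ Ω, pds B p = pdt C p)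
    (hCR4 : ∀ p ∈ Ω, pdt B p = - pds C p)
    (hne : Ω.Nonempty) (hconn : IsConnected Ω)
    (hsc : SimplyConnectedSpace Ω)
    :
    ∃ g : ℝ × ℝ → ℝ, ContDiffOn ℝ (⊤ : ℕ∞) g Ω ∧
      ∀ p ∈ Ω, pds g p = det2 (xs A B p) (cmap C D p) ∧
        pdt g p = det2 (xt A B p) (cmap C D p) := by
  exact exists_generating_g_general (n := ⊤) (by simp) hΩ hsc hA hB hC hD fun p hp ↦
    det2_xs_xt_eq_of_cauchyRiemann (hCR1 p hp) (hCR2 p hp) (hCR3 p hp) (hCR4 p hp)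
end
end

section
/- On Ω the second partial derivatives of g satisfy g_ss = [x_ss, c] − δ, g_st = [x_st, c], and g_tt = [x_tt, c] − δ. (These identities express that the second derivatives of the map q = (x,g) decompose in the basis {q_s, q_t, (0,0,1)} with coefficients of (0,0,1) equal to −δ, −δ, 0 respectively, which is the computation showing that (0,0,1) is the Blaschke affine normal of q, i.e. that q is an improper affine sphere where δ ≠ 0.) -/
noncomputable section

/-! The Cauchy–Riemann equations say `c_s = -x_t` and `c_t = x_s`. Hence differentiating
`g_s = [x_s, c]` and `g_t = [x_t, c]` by the Leibniz rule produces, besides the expected terms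
`[x_ss, c]`, `[x_st, c]` and `[x_tt, c]`, only the corrections `[x_s, c_s] = -[x_s, x_t] = -δ`,
`[x_s, c_t] = [x_s, x_s] = 0` and `[x_t, c_t] = [x_t, x_s] = -δ`. -/

open Filter Topology

theorem det2_self (u : ℝ × ℝ) : det2 u u = 0 := by
  rw [det2]; ring

theorem det2_neg_right (u v : ℝ × ℝ) : det2 u (-v) = -det2 u v := by
  simp only [det2, Prod.fst_neg, Prod.snd_neg]; ring

theorem det2_swap (u v : ℝ × ℝ) : det2 u v = -det2 v u := by
  simp only [det2]; ring

theorem deltaMap_eq_det2 (A B : ℝ × ℝ → ℝ) (p : ℝ × ℝ) :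
    deltaMap A B p = det2 (xs A B p) (xt A B p) := by
  simp only [deltaMap, det2, xs, xt]; ring

theorem differentiableAt_fderiv_apply {𝕜 E F : Type*} [NontriviallyNormedField 𝕜]
    [NormedAddCommGroup E] [NormedSpace 𝕜 E] [NormedAddCommGroup F] [NormedSpace 𝕜 F]
    {f : E → F} {p : E} (hf : ContDiffAt 𝕜 2 f p) (v : E) :
    DifferentiableAt 𝕜 (fun q => fderiv 𝕜 f q v) p :=
  ((hf.fderiv_right (m := 1) (by norm_num)).differentiableAt one_ne_zero).clm_apply
    (differentiableAt_const v)

section Bracket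

variable {E : Type*} [NormedAddCommGroup E] [NormedSpace ℝ E] {p : E}

theorem fderiv_det2_apply {u v : E → ℝ × ℝ} (hu : DifferentiableAt ℝ u p)
    (hv : DifferentiableAt ℝ v p) (w : E) :
    fderiv ℝ (fun q => det2 (u q) (v q)) p w =
      det2 (fderiv ℝ u p w) (v p) + det2 (u p) (fderiv ℝ v p w) := by
  have h : HasFDerivAt (fun q => det2 (u q) (v q)) _ p :=
    (hu.hasFDerivAt.fst.mul hv.hasFDerivAt.snd).sub (hu.hasFDerivAt.snd.mul hv.hasFDerivAt.fst)
  rw [h.fderiv]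
  simp only [det2, sub_apply, add_apply, smul_apply, smul_eq_mul,
    ContinuousLinearMap.comp_apply, ContinuousLinearMap.coe_fst', ContinuousLinearMap.coe_snd']
  ring

theorem fderiv_fderiv_apply_of_eq_det2 {g a b : E → ℝ} {c : E → ℝ × ℝ} {v : E}
    (hg : ∀ᶠ q in 𝓝 p, fderiv ℝ g q v = det2 (fderiv ℝ a q v, fderiv ℝ b q v) (c q))
    (ha : ContDiffAt ℝ 2 a p) (hb : ContDiffAt ℝ 2 b p) (hc : DifferentiableAt ℝ c p) (w : E) :
    fderiv ℝ (fun q => fderiv ℝ g q v) p w =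
      det2 (fderiv ℝ (fun q => fderiv ℝ a q v) p w, fderiv ℝ (fun q => fderiv ℝ b q v) p w) (c p) +
        det2 (fderiv ℝ a p v, fderiv ℝ b p v) (fderiv ℝ c p w) := by
  have ha' := differentiableAt_fderiv_apply ha v
  have hb' := differentiableAt_fderiv_apply hb v
  rw [EventuallyEq.fderiv_eq hg, fderiv_det2_apply (ha'.prodMk hb') hc, ha'.fderiv_prodMk hb']
  rfl

end Bracket

section ConjugateMap

variable {A B C D : ℝ × ℝ → ℝ} {p : ℝ × ℝ}

theorem differentiableAt_cmap (hC : DifferentiableAt ℝ C p) (hD : DifferentiableAt ℝ D p) :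
    DifferentiableAt ℝ (cmap C D) p :=
  hD.neg.prodMk hC

theorem fderiv_cmap_apply (hC : DifferentiableAt ℝ C p) (hD : DifferentiableAt ℝ D p)
    (w : ℝ × ℝ) : fderiv ℝ (cmap C D) p w = (-fderiv ℝ D p w, fderiv ℝ C p w) := by
  have h : HasFDerivAt (cmap C D) ((-fderiv ℝ D p).prod (fderiv ℝ C p)) p :=
    hD.hasFDerivAt.neg.prodMk hC.hasFDerivAt
  rw [h.fderiv]
  rfl

theorem fderiv_cmap_s_eq_neg_xt (hC : DifferentiableAt ℝ C p) (hD : DifferentiableAt ℝ D p)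
    (hAD : pdt A p = pds D p) (hBC : pdt B p = -pds C p) :
    fderiv ℝ (cmap C D) p (1, 0) = -xt A B p := by
  rw [fderiv_cmap_apply hC hD, xt, hAD, hBC, Prod.neg_mk, neg_neg]
  rfl

theorem fderiv_cmap_t_eq_xs (hC : DifferentiableAt ℝ C p) (hD : DifferentiableAt ℝ D p)
    (hAD : pds A p = -pdt D p) (hBC : pds B p = pdt C p) :
    fderiv ℝ (cmap C D) p (0, 1) = xs A B p := by
  rw [fderiv_cmap_apply hC hD, xs, hAD, hBC]
  rfl

end ConjugateMap

theorem second_derivatives_of_g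
    (Ω : Set (ℝ × ℝ)) (hΩ : IsOpen Ω)
    (A B C D : ℝ × ℝ → ℝ)
    (hA : ContDiffOn ℝ (⊤ : ℕ∞) A Ω) (hB : ContDiffOn ℝ (⊤ : ℕ∞) B Ω)
    (hC : ContDiffOn ℝ (⊤ : ℕ∞) C Ω) (hD : ContDiffOn ℝ (⊤ : ℕ∞) D Ω)
    (hCR1 : ∀ p ∈ Ω, pds A p = - pdt D p)
    (hCR2 : ∀ p ∈ Ω, pdt A p = pds D p)
    (hCR3 : ∀ p ∈ Ω, pds B p = pdt C p)
    (hCR4 : ∀ p ∈ Ω, pdt B p = - pds C p)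
    (g : ℝ × ℝ → ℝ) (hg : ContDiffOn ℝ (⊤ : ℕ∞) g Ω)
    (hgs : ∀ p ∈ Ω, pds g p = det2 (xs A B p) (cmap C D p))
    (hgt : ∀ p ∈ Ω, pdt g p = det2 (xt A B p) (cmap C D p))
    :
    ∀ p ∈ Ω,
      pds (pds g) p = det2 (pds (pds A) p, pds (pds B) p) (cmap C D p) - deltaMap A B p ∧
      pdt (pds g) p = det2 (pdt (pds A) p, pdt (pds B) p) (cmap C D p) ∧
      pdt (pdt g) p = det2 (pdt (pdt A) p, pdt (pdt B) p) (cmap C D p) - deltaMap A B p := by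
  intro p hp
  have hΩp : Ω ∈ 𝓝 p := hΩ.mem_nhds hp
  have contDiffAt_two {f : ℝ × ℝ → ℝ} (hf : ContDiffOn ℝ (⊤ : ℕ∞) f Ω) : ContDiffAt ℝ 2 f p :=
    (hf.contDiffAt hΩp).of_le (by norm_cast)
  have hC' : DifferentiableAt ℝ C p := (contDiffAt_two hC).differentiableAt two_ne_zero
  have hD' : DifferentiableAt ℝ D p := (contDiffAt_two hD).differentiableAt two_ne_zero
  have hc : DifferentiableAt ℝ (cmap C D) p := differentiableAt_cmap hC' hD'
  have hcs := fderiv_cmap_s_eq_neg_xt hC' hD' (hCR2 p hp) (hCR4 p hp)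
  have hct := fderiv_cmap_t_eq_xs hC' hD' (hCR1 p hp) (hCR3 p hp)
  have leibniz_s := fderiv_fderiv_apply_of_eq_det2 (eventually_of_mem hΩp hgs)
    (contDiffAt_two hA) (contDiffAt_two hB) hc
  have leibniz_t := fderiv_fderiv_apply_of_eq_det2 (eventually_of_mem hΩp hgt)
    (contDiffAt_two hA) (contDiffAt_two hB) hc
  rw [deltaMap_eq_det2, sub_eq_add_neg, sub_eq_add_neg]
  refine ⟨?_, ?_, ?_⟩
  · rw [← det2_neg_right, ← hcs]
    exact leibniz_s (1, 0)
  · refine (leibniz_s (0, 1)).trans ?_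
    rw [hct]
    exact add_eq_left.mpr (det2_self _)
  · rw [← det2_swap, ← hct]
    exact leibniz_t (0, 1)
end
end

section
/- For all (s,x̄) ∈ I × U, the partial derivative of the generating family G in s satisfies G_s(s,x̄) = [∂/∂s(x(s,t(s,x̄))), c(s,t(s,x̄))] = [x̄ − x(s,t(s,x̄)), ∂/∂s(c(s,t(s,x̄)))]. -/
noncomputable section

/-!
Along a curve `γ` the chain rule turns `dg = [dx, c]` into `(g ∘ γ)' = [(x ∘ γ)', c ∘ γ]`.
The curve `γ(s) = (s, t(s, x̄))` is chosen so that `[x̄ - x ∘ γ, c ∘ γ]` vanishes identically, and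
differentiating this identity gives `[(x ∘ γ)', c ∘ γ] = [x̄ - x ∘ γ, (c ∘ γ)']`.
-/

open Filter Set Topology

section Calculus

variable {𝕜 : Type*} [NontriviallyNormedField 𝕜]
  {E F G : Type*} [NormedAddCommGroup E] [NormedSpace 𝕜 E] [NormedAddCommGroup F]
  [NormedSpace 𝕜 F] [NormedAddCommGroup G] [NormedSpace 𝕜 G]

theorem differentiableOn_graph_slice {f : E → F → G} {S : Set E} {U : Set F} {y : F}
    (hf : DifferentiableOn 𝕜 (fun q : E × F => f q.1 q.2) (S ×ˢ U)) (hy : y ∈ U) :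
    DifferentiableOn 𝕜 (fun s => (s, f s y)) S :=
  differentiableOn_id.prodMk <| hf.comp (by fun_prop) fun _ hs => mk_mem_prod hs hy

theorem bilin_deriv_left_eq_bilin_deriv_right {β : E →L[𝕜] F →L[𝕜] G} {u : 𝕜 → E} {v : 𝕜 → F}
    {a : E} {s : 𝕜} (hu : DifferentiableAt 𝕜 u s) (hv : DifferentiableAt 𝕜 v s)
    (hβ : ∀ᶠ s' in 𝓝 s, β (a - u s') (v s') = 0) :
    β (deriv u s) (v s) = β (a - u s) (deriv v s) := by
  have leibniz : HasDerivAt (fun s' => β (a - u s') (v s'))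
      (β (a - u s) (deriv v s) + β (-deriv u s) (v s)) s :=
    β.hasDerivAt_of_bilinear (fun _ => hu.hasDerivAt.const_sub a) fun _ => hv.hasDerivAt
  have vanishing : HasDerivAt (fun s' => β (a - u s') (v s')) 0 s :=
    (hasDerivAt_const s 0).congr_of_eventuallyEq hβ
  have sum_eq_zero := leibniz.unique vanishing
  rw [map_neg, neg_apply, ← sub_eq_add_neg, sub_eq_zero] at sum_eq_zero
  exact sum_eq_zero.symm

end Calculus

/-- The determinant `det2` as a continuous bilinear map, so that the bilinear product rule
applies to it. -/
def det2L : ℝ × ℝ →L[ℝ] ℝ × ℝ →L[ℝ] ℝ :=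
  (ContinuousLinearMap.mul ℝ ℝ).bilinearComp (.fst ℝ ℝ ℝ) (.snd ℝ ℝ ℝ) -
    (ContinuousLinearMap.mul ℝ ℝ).bilinearComp (.snd ℝ ℝ ℝ) (.fst ℝ ℝ ℝ)

theorem det2L_apply (u v : ℝ × ℝ) : det2L u v = det2 u v := rfl

theorem det2_deriv_left_eq_det2_deriv_right {u v : ℝ → ℝ × ℝ} {a : ℝ × ℝ} {s : ℝ}
    (hu : DifferentiableAt ℝ u s) (hv : DifferentiableAt ℝ v s)
    (hdet : ∀ᶠ s' in 𝓝 s, det2 (a - u s') (v s') = 0) :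
    det2 (deriv u s) (v s) = det2 (a - u s) (deriv v s) := by
  simp only [← det2L_apply] at hdet ⊢
  exact bilin_deriv_left_eq_bilin_deriv_right hu hv hdet

theorem fderiv_apply_eq_pds_add_pdt (f : ℝ × ℝ → ℝ) (p v : ℝ × ℝ) :
    fderiv ℝ f p v = v.1 * pds f p + v.2 * pdt f p := by
  have v_eq : v = v.1 • ((1 : ℝ), (0 : ℝ)) + v.2 • ((0 : ℝ), (1 : ℝ)) := by simp
  conv_lhs => rw [v_eq, map_add, map_smul, map_smul]
  rfl

theorem fderiv_xmap_apply {A B : ℝ × ℝ → ℝ} {p : ℝ × ℝ} (hA : DifferentiableAt ℝ A p)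
    (hB : DifferentiableAt ℝ B p) (v : ℝ × ℝ) :
    fderiv ℝ (xmap A B) p v = v.1 • xs A B p + v.2 • xt A B p := by
  have fderiv_xmap : fderiv ℝ (xmap A B) p = (fderiv ℝ A p).prod (fderiv ℝ B p) :=
    hA.fderiv_prodMk hB
  rw [fderiv_xmap, ContinuousLinearMap.prod_apply, fderiv_apply_eq_pds_add_pdt A,
    fderiv_apply_eq_pds_add_pdt B]
  rfl

theorem fderiv_apply_eq_det2_fderiv_xmap {A B g : ℝ × ℝ → ℝ} {p w : ℝ × ℝ}
    (hA : DifferentiableAt ℝ A p) (hB : DifferentiableAt ℝ B p)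
    (hgs : pds g p = det2 (xs A B p) w) (hgt : pdt g p = det2 (xt A B p) w) (v : ℝ × ℝ) :
    fderiv ℝ g p v = det2 (fderiv ℝ (xmap A B) p v) w := by
  rw [fderiv_apply_eq_pds_add_pdt, hgs, hgt, fderiv_xmap_apply hA hB]
  simp only [← det2L_apply, map_add, map_smul, add_apply, smul_apply, smul_eq_mul]

theorem Gs_formulas_general {Ω : Set (ℝ × ℝ)} (hΩ : IsOpen Ω) {A B C D g : ℝ × ℝ → ℝ}
    (hA : DifferentiableOn ℝ A Ω) (hB : DifferentiableOn ℝ B Ω)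
    (hC : DifferentiableOn ℝ C Ω) (hD : DifferentiableOn ℝ D Ω) (hg : DifferentiableOn ℝ g Ω)
    (hgs : ∀ p ∈ Ω, pds g p = det2 (xs A B p) (cmap C D p))
    (hgt : ∀ p ∈ Ω, pdt g p = det2 (xt A B p) (cmap C D p))
    {I : Set ℝ} (hI : IsOpen I) {γ : ℝ → ℝ × ℝ} (hγ : DifferentiableOn ℝ γ I)
    (hγΩ : MapsTo γ I Ω) {xb : ℝ × ℝ}
    (hγ_det : ∀ s ∈ I, det2 (xb - xmap A B (γ s)) (cmap C D (γ s)) = 0)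
    {s : ℝ} (hs : s ∈ I) :
    deriv (fun s' => g (γ s')) s
        = det2 (deriv (fun s' => xmap A B (γ s')) s) (cmap C D (γ s)) ∧
      deriv (fun s' => g (γ s')) s
        = det2 (xb - xmap A B (γ s)) (deriv (fun s' => cmap C D (γ s')) s) := by
  have mem_nhds_Ω : Ω ∈ 𝓝 (γ s) := hΩ.mem_nhds (hγΩ hs)
  have hA_at := hA.differentiableAt mem_nhds_Ω
  have hB_at := hB.differentiableAt mem_nhds_Ω
  have hγ_at := hγ.differentiableAt (hI.mem_nhds hs)
  have hx_at : DifferentiableAt ℝ (xmap A B) (γ s) := hA_at.prodMk hB_at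
  have hc_at : DifferentiableAt ℝ (cmap C D) (γ s) :=
    (hD.differentiableAt mem_nhds_Ω).neg.prodMk (hC.differentiableAt mem_nhds_Ω)
  have deriv_g : deriv (fun s' => g (γ s')) s
      = det2 (deriv (fun s' => xmap A B (γ s')) s) (cmap C D (γ s)) :=
    calc deriv (fun s' => g (γ s')) s
      _ = fderiv ℝ g (γ s) (deriv γ s) :=
        fderiv_comp_deriv s (hg.differentiableAt mem_nhds_Ω) hγ_at
      _ = det2 (fderiv ℝ (xmap A B) (γ s) (deriv γ s)) (cmap C D (γ s)) :=
        fderiv_apply_eq_det2_fderiv_xmap hA_at hB_at (hgs _ (hγΩ hs)) (hgt _ (hγΩ hs)) _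
      _ = det2 (deriv (fun s' => xmap A B (γ s')) s) (cmap C D (γ s)) := by
        rw [← fderiv_comp_deriv s hx_at hγ_at, Function.comp_def]
  refine ⟨deriv_g, deriv_g.trans ?_⟩
  exact det2_deriv_left_eq_det2_deriv_right (hx_at.comp s hγ_at) (hc_at.comp s hγ_at)
    (eventually_of_mem (hI.mem_nhds hs) hγ_det)

theorem Gs_formulas
    (Ω : Set (ℝ × ℝ)) (hΩ : IsOpen Ω)
    (A B C D : ℝ × ℝ → ℝ)
    (hA : ContDiffOn ℝ (⊤ : ℕ∞) A Ω) (hB : ContDiffOn ℝ (⊤ : ℕ∞) B Ω)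
    (hC : ContDiffOn ℝ (⊤ : ℕ∞) C Ω) (hD : ContDiffOn ℝ (⊤ : ℕ∞) D Ω)
    (hCR1 : ∀ p ∈ Ω, pds A p = - pdt D p)
    (hCR2 : ∀ p ∈ Ω, pdt A p = pds D p)
    (hCR3 : ∀ p ∈ Ω, pds B p = pdt C p)
    (hCR4 : ∀ p ∈ Ω, pdt B p = - pds C p)
    (g : ℝ × ℝ → ℝ) (hg : ContDiffOn ℝ (⊤ : ℕ∞) g Ω)
    (hgs : ∀ p ∈ Ω, pds g p = det2 (xs A B p) (cmap C D p))
    (hgt : ∀ p ∈ Ω, pdt g p = det2 (xt A B p) (cmap C D p))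
    (s₀ t₀ : ℝ) (hst₀ : (s₀, t₀) ∈ Ω)
    (hne₀ : det2 (xt A B (s₀, t₀)) (cmap C D (s₀, t₀)) ≠ 0)
    (I : Set ℝ) (U : Set (ℝ × ℝ)) (hI : IsOpen I) (hU : IsOpen U)
    (hs₀ : s₀ ∈ I) (hx₀ : xmap A B (s₀, t₀) ∈ U)
    (T : ℝ → ℝ × ℝ → ℝ)
    (hT : ContDiffOn ℝ (⊤ : ℕ∞) (fun q : ℝ × (ℝ × ℝ) => T q.1 q.2) (I ×ˢ U))
    (hT₀ : T s₀ (xmap A B (s₀, t₀)) = t₀)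
    (hTmem : ∀ s ∈ I, ∀ xb ∈ U, (s, T s xb) ∈ Ω)
    (hTeq : ∀ s ∈ I, ∀ xb ∈ U,
      det2 (xb - xmap A B (s, T s xb)) (cmap C D (s, T s xb)) = 0)
    :
    ∀ s ∈ I, ∀ xb ∈ U,
      deriv (fun s' => g (s', T s' xb)) s
        = det2 (deriv (fun s' => xmap A B (s', T s' xb)) s) (cmap C D (s, T s xb)) ∧
      deriv (fun s' => g (s', T s' xb)) s
        = det2 (xb - xmap A B (s, T s xb)) (deriv (fun s' => cmap C D (s', T s' xb)) s) := by
  intro s hs xb hxb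
  exact Gs_formulas_general hΩ (hA.differentiableOn (by simp)) (hB.differentiableOn (by simp))
    (hC.differentiableOn (by simp)) (hD.differentiableOn (by simp))
    (hg.differentiableOn (by simp)) hgs hgt hI
    (differentiableOn_graph_slice (hT.differentiableOn (by simp)) hxb)
    (fun s' hs' => hTmem s' hs' xb hxb) (fun s' hs' => hTeq s' hs' xb hxb) hs
end
end

section
/- Let (s,x̄) ∈ I × U and suppose the vectors c(s,t(s,x̄)) and ∂/∂s(c(s,t(s,x̄))) are linearly independent in ℝ². Then G_s(s,x̄) = 0 if and only if x̄ = x(s,t(s,x̄)). -/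
/-!
Write `x`, `c` for the values along the curve `s ↦ (s, t(s, x̄))` and a prime for `d/ds`. The
equations for `g` give `G_s = [x', c]`, and differentiating the tangency condition
`[x̄ - x, c] = 0` gives `[x', c] = [x̄ - x, c']`. Since `x̄ - x` already pairs to zero with `c`, and
`c`, `c'` span the plane, `G_s` vanishes exactly when `x̄ - x` does.
-/

noncomputable section

open scoped Topology

section Determinant

lemma det2_add_left (u v w : ℝ × ℝ) : det2 (u + v) w = det2 u w + det2 v w := by
  simp only [det2, Prod.fst_add, Prod.snd_add]
  ring

lemma det2_smul_left (a : ℝ) (u v : ℝ × ℝ) : det2 (a • u) v = a * det2 u v := by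
  simp only [det2, Prod.smul_fst, Prod.smul_snd, smul_eq_mul]
  ring

lemma det2_neg_left (u v : ℝ × ℝ) : det2 (-u) v = -det2 u v := by
  simp only [det2, Prod.fst_neg, Prod.snd_neg]
  ring

lemma det2_zero_left (v : ℝ × ℝ) : det2 0 v = 0 := by
  simp only [det2, Prod.fst_zero, Prod.snd_zero, zero_mul, sub_zero]

lemma det2_smul_eq_sub (u v w : ℝ × ℝ) :
    det2 u v • w = det2 w v • u - det2 w u • v := by
  ext
  · simp only [det2, Prod.smul_fst, Prod.fst_sub, smul_eq_mul]
    ring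
  · simp only [det2, Prod.smul_snd, Prod.snd_sub, smul_eq_mul]
    ring

lemma det2_ne_zero_of_linearIndependent {u v : ℝ × ℝ} (h : LinearIndependent ℝ ![u, v]) :
    det2 u v ≠ 0 := by
  intro huv
  have det2_left_eq_zero (w : ℝ × ℝ) : det2 w u = 0 := by
    refine neg_eq_zero.mp (LinearIndependent.pair_iff.mp h (det2 w v) (-det2 w u) ?_).2
    rw [neg_smul, ← sub_eq_add_neg, ← det2_smul_eq_sub, huv, zero_smul]
  have hu : u = 0 := Prod.ext
    (by simpa [det2] using det2_left_eq_zero (0, 1))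
    (by simpa [det2] using det2_left_eq_zero (1, 0))
  exact h.ne_zero 0 hu

lemma det2_eq_zero_iff_of_linearIndependent {u v w : ℝ × ℝ} (h : LinearIndependent ℝ ![u, v])
    (hwu : det2 w u = 0) : det2 w v = 0 ↔ w = 0 := by
  refine ⟨fun hwv => ?_, fun hw => by rw [hw, det2_zero_left]⟩
  have hsmul : det2 u v • w = 0 := by
    rw [det2_smul_eq_sub, hwu, hwv, zero_smul, zero_smul, sub_zero]
  exact (smul_eq_zero.mp hsmul).resolve_left (det2_ne_zero_of_linearIndependent h)

end Determinant

section PlaneCurves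

variable {x c : ℝ → ℝ × ℝ} {x' c' y : ℝ × ℝ} {s : ℝ}

lemma hasDerivAt_det2 (hx : HasDerivAt x x' s) (hc : HasDerivAt c c' s) :
    HasDerivAt (fun r => det2 (x r) (c r)) (det2 x' (c s) + det2 (x s) c') s := by
  have hx₁ : HasDerivAt (fun r => (x r).1) x'.1 s :=
    (hasFDerivAt_fst (p := x s)).comp_hasDerivAt s hx
  have hx₂ : HasDerivAt (fun r => (x r).2) x'.2 s :=
    (hasFDerivAt_snd (p := x s)).comp_hasDerivAt s hx
  have hc₁ : HasDerivAt (fun r => (c r).1) c'.1 s :=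
    (hasFDerivAt_fst (p := c s)).comp_hasDerivAt s hc
  have hc₂ : HasDerivAt (fun r => (c r).2) c'.2 s :=
    (hasFDerivAt_snd (p := c s)).comp_hasDerivAt s hc
  refine ((hx₁.mul hc₂).sub (hx₂.mul hc₁)).congr_deriv ?_
  simp only [det2]
  ring

lemma det2_deriv_left_eq (hx : HasDerivAt x x' s) (hc : HasDerivAt c c' s)
    (htan : ∀ᶠ r in 𝓝 s, det2 (y - x r) (c r) = 0) :
    det2 x' (c s) = det2 (y - x s) c' := by
  have hderiv := hasDerivAt_det2 (hx.const_sub y) hc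
  have hzero := (hasDerivAt_const s (0 : ℝ)).congr_of_eventuallyEq htan
  have hsum : det2 (-x') (c s) + det2 (y - x s) c' = 0 := hderiv.unique hzero
  rw [det2_neg_left] at hsum
  linarith

lemma det2_deriv_eq_zero_iff (hx : HasDerivAt x x' s)
    (htan : ∀ᶠ r in 𝓝 s, det2 (y - x r) (c r) = 0)
    (hli : LinearIndependent ℝ ![c s, deriv c s]) :
    det2 x' (c s) = 0 ↔ y = x s := by
  have hc : DifferentiableAt ℝ c s := differentiableAt_of_deriv_ne_zero (hli.ne_zero 1)
  rw [det2_deriv_left_eq hx hc.hasDerivAt htan,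
    det2_eq_zero_iff_of_linearIndependent hli htan.self_of_nhds, sub_eq_zero]

end PlaneCurves

section Graphs

variable {A B g f : ℝ × ℝ → ℝ} {t : ℝ → ℝ} {t' s : ℝ}

lemma hasDerivAt_comp_graph (hf : DifferentiableAt ℝ f (s, t s)) (ht : HasDerivAt t t' s) :
    HasDerivAt (fun r => f (r, t r)) (pds f (s, t s) + t' * pdt f (s, t s)) s := by
  have hgraph : HasDerivAt (fun r => (r, t r)) ((1 : ℝ), t') s := (hasDerivAt_id s).prodMk ht
  refine (hf.hasFDerivAt.comp_hasDerivAt s hgraph).congr_deriv ?_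
  have hsplit : ((1 : ℝ), t') = (1, 0) + t' • (0, 1) := by simp
  rw [hsplit, map_add, map_smul, smul_eq_mul, pds, pdt]

lemma hasDerivAt_xmap_comp_graph (hA : DifferentiableAt ℝ A (s, t s))
    (hB : DifferentiableAt ℝ B (s, t s)) (ht : HasDerivAt t t' s) :
    HasDerivAt (fun r => xmap A B (r, t r)) (xs A B (s, t s) + t' • xt A B (s, t s)) s :=
  (hasDerivAt_comp_graph hA ht).prodMk (hasDerivAt_comp_graph hB ht)

lemma hasDerivAt_comp_graph_of_partials_eq_det2 {u v w : ℝ × ℝ}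
    (hg : DifferentiableAt ℝ g (s, t s)) (hgs : pds g (s, t s) = det2 u w)
    (hgt : pdt g (s, t s) = det2 v w) (ht : HasDerivAt t t' s) :
    HasDerivAt (fun r => g (r, t r)) (det2 (u + t' • v) w) s := by
  rw [det2_add_left, det2_smul_left, ← hgs, ← hgt]
  exact hasDerivAt_comp_graph hg ht

end Graphs

theorem Gs_eq_zero_iff_general {A B C D g : ℝ × ℝ → ℝ} {t : ℝ → ℝ} {s : ℝ} {xb : ℝ × ℝ}
    (hA : DifferentiableAt ℝ A (s, t s)) (hB : DifferentiableAt ℝ B (s, t s))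
    (hg : DifferentiableAt ℝ g (s, t s))
    (hgs : pds g (s, t s) = det2 (xs A B (s, t s)) (cmap C D (s, t s)))
    (hgt : pdt g (s, t s) = det2 (xt A B (s, t s)) (cmap C D (s, t s)))
    (ht : DifferentiableAt ℝ t s)
    (htan : ∀ᶠ r in 𝓝 s, det2 (xb - xmap A B (r, t r)) (cmap C D (r, t r)) = 0)
    (hli : LinearIndependent ℝ ![cmap C D (s, t s), deriv (fun r => cmap C D (r, t r)) s]) :
    deriv (fun r => g (r, t r)) s = 0 ↔ xb = xmap A B (s, t s) := by
  have hG := hasDerivAt_comp_graph_of_partials_eq_det2 hg hgs hgt ht.hasDerivAt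
  have hx := hasDerivAt_xmap_comp_graph hA hB ht.hasDerivAt
  rw [hG.deriv]
  exact det2_deriv_eq_zero_iff hx htan hli

theorem Gs_eq_zero_iff
    (Ω : Set (ℝ × ℝ)) (hΩ : IsOpen Ω)
    (A B C D : ℝ × ℝ → ℝ)
    (hA : ContDiffOn ℝ (⊤ : ℕ∞) A Ω) (hB : ContDiffOn ℝ (⊤ : ℕ∞) B Ω)
    (hC : ContDiffOn ℝ (⊤ : ℕ∞) C Ω) (hD : ContDiffOn ℝ (⊤ : ℕ∞) D Ω)
    (hCR1 : ∀ p ∈ Ω, pds A p = - pdt D p)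
    (hCR2 : ∀ p ∈ Ω, pdt A p = pds D p)
    (hCR3 : ∀ p ∈ Ω, pds B p = pdt C p)
    (hCR4 : ∀ p ∈ Ω, pdt B p = - pds C p)
    (g : ℝ × ℝ → ℝ) (hg : ContDiffOn ℝ (⊤ : ℕ∞) g Ω)
    (hgs : ∀ p ∈ Ω, pds g p = det2 (xs A B p) (cmap C D p))
    (hgt : ∀ p ∈ Ω, pdt g p = det2 (xt A B p) (cmap C D p))
    (s₀ t₀ : ℝ) (hst₀ : (s₀, t₀) ∈ Ω)
    (hne₀ : det2 (xt A B (s₀, t₀)) (cmap C D (s₀, t₀)) ≠ 0)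
    (I : Set ℝ) (U : Set (ℝ × ℝ)) (hI : IsOpen I) (hU : IsOpen U)
    (hs₀ : s₀ ∈ I) (hx₀ : xmap A B (s₀, t₀) ∈ U)
    (T : ℝ → ℝ × ℝ → ℝ)
    (hT : ContDiffOn ℝ (⊤ : ℕ∞) (fun q : ℝ × (ℝ × ℝ) => T q.1 q.2) (I ×ˢ U))
    (hT₀ : T s₀ (xmap A B (s₀, t₀)) = t₀)
    (hTmem : ∀ s ∈ I, ∀ xb ∈ U, (s, T s xb) ∈ Ω)
    (hTeq : ∀ s ∈ I, ∀ xb ∈ U,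
      det2 (xb - xmap A B (s, T s xb)) (cmap C D (s, T s xb)) = 0)
    (s : ℝ) (xb : ℝ × ℝ) (hs : s ∈ I) (hxb : xb ∈ U)
    (hli : LinearIndependent ℝ
      ![cmap C D (s, T s xb), deriv (fun s' => cmap C D (s', T s' xb)) s])
    :
    deriv (fun s' => g (s', T s' xb)) s = 0 ↔ xb = xmap A B (s, T s xb) := by
  have hp : (s, T s xb) ∈ Ω := hTmem s hs xb hxb
  have hdiff {f : ℝ × ℝ → ℝ} (hf : ContDiffOn ℝ (⊤ : ℕ∞) f Ω) :
      DifferentiableAt ℝ f (s, T s xb) :=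
    (hf.contDiffAt (hΩ.mem_nhds hp)).differentiableAt (by simp)
  have hTdiff : DifferentiableAt ℝ (fun q : ℝ × (ℝ × ℝ) => T q.1 q.2) (s, xb) :=
    (hT.contDiffAt ((hI.prod hU).mem_nhds ⟨hs, hxb⟩)).differentiableAt (by simp)
  have hTs : DifferentiableAt ℝ (fun r => T r xb) s :=
    hTdiff.comp s (f := fun r => (r, xb)) (by fun_prop)
  have htan := Filter.eventually_of_mem (hI.mem_nhds hs) fun r hr => hTeq r hr xb hxb
  exact Gs_eq_zero_iff_general (hdiff hA) (hdiff hB) (hdiff hg) (hgs _ hp) (hgt _ hp) hTs htan hli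
end
end
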